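/- Let δ ∈ ℤ and let λ be a partition. Then #{(i,j) ∈ [λ] : d(i,j) = 1 − δ} = min(a, b), where b := deg_δ(λ) is the number of vertices of L labelled × in the weight diagram x_λ and a := #{n ∈ L : no entry of e_δ(λ) has absolute value n} is the number of vertices labelled ∘. -/

import Mathlib

open Polynomial

/-- A partition: a weakly decreasing, finitely supported sequence of naturals λ_1, λ_2, …. -/
structure Ptn where
  toFun : ℕ+ → ℕ
  antitone' : ∀ i j : ℕ+, i ≤ j → toFun j ≤ toFun i
  finite_support' : ∃ N : ℕ+, ∀ i : ℕ+, N ≤ i → toFun i = 0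

namespace Ptn

/-- The transpose partition: λ^T_i = #{k ≥ 1 : λ_k ≥ i}. -/
noncomputable def transpose (p : Ptn) (i : ℕ+) : ℕ :=
  Set.ncard {k : ℕ+ | (i : ℕ) ≤ p.toFun k}

/-- The empty partition. -/
def empty : Ptn where
  toFun := fun _ => 0
  antitone' := fun _ _ _ => le_refl 0
  finite_support' := ⟨1, fun _ _ => rfl⟩

end Ptn

/-- e_δ(λ)_i = λ^T_i − δ/2 − i + 1. -/
noncomputable def ed (δ : ℤ) (p : Ptn) (i : ℕ+) : ℚ :=
  (p.transpose i : ℚ) - (δ : ℚ) / 2 - ((i : ℕ) : ℚ) + 1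

/-- The δ-degree of singularity: #{(i,j) : 1 ≤ i < j, e_δ(λ)_i + e_δ(λ)_j = 0}. -/
noncomputable def degd (δ : ℤ) (p : Ptn) : ℕ :=
  Set.ncard {q : ℕ+ × ℕ+ | q.1 < q.2 ∧ ed δ p q.1 + ed δ p q.2 = 0}

/-- The vertex set L: nonnegative integers if δ is even, {1/2, 3/2, …} if δ is odd. -/
def Lset (δ : ℤ) : Set ℚ :=
  {n : ℚ | 0 ≤ n ∧ ∃ k : ℤ, n + (δ : ℚ) / 2 = (k : ℚ)}

/-- Vertex n is labelled ∘ in x_λ: no entry of e_δ(λ) has absolute value n. -/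
def IsCirc (δ : ℤ) (p : Ptn) (n : ℚ) : Prop := ∀ i : ℕ+, |ed δ p i| ≠ n

/-- Vertex n is labelled × in x_λ: n > 0 and both n and −n occur as entries. -/
def IsTimes (δ : ℤ) (p : Ptn) (n : ℚ) : Prop :=
  0 < n ∧ (∃ i : ℕ+, ed δ p i = n) ∧ (∃ i : ℕ+, ed δ p i = -n)

/-- Vertex n is labelled ∧ in x_λ: n > 0, n occurs as an entry and −n does not. -/
def IsUp (δ : ℤ) (p : Ptn) (n : ℚ) : Prop :=
  0 < n ∧ (∃ i : ℕ+, ed δ p i = n) ∧ ¬ (∃ i : ℕ+, ed δ p i = -n)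

/-- Vertex n is labelled ∨ in x_λ: n > 0, −n occurs and n does not, or n = 0 and 0 occurs. -/
def IsDown (δ : ℤ) (p : Ptn) (n : ℚ) : Prop :=
  (0 < n ∧ (∃ i : ℕ+, ed δ p i = -n) ∧ ¬ (∃ i : ℕ+, ed δ p i = n)) ∨
  (n = 0 ∧ ∃ i : ℕ+, ed δ p i = 0)

/-- q is obtained from p by adding one box, in row k. -/
def AddBoxAt (p q : Ptn) (k : ℕ+) : Prop :=
  q.toFun k = p.toFun k + 1 ∧ ∀ t : ℕ+, t ≠ k → q.toFun t = p.toFun t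

/-- q is obtained from p by removing one box, from row l. -/
def RemoveBoxAt (p q : Ptn) (l : ℕ+) : Prop :=
  q.toFun l + 1 = p.toFun l ∧ ∀ t : ℕ+, t ≠ l → q.toFun t = p.toFun t

/-- A box is addable to p at position (k,i): λ_k + 1 = i and increasing the k-th part
yields a partition. -/
def AddableAt (p : Ptn) (k i : ℕ+) : Prop :=
  p.toFun k + 1 = (i : ℕ) ∧ ∃ q : Ptn, AddBoxAt p q k

/-- A box is removable from p at position (l,j): λ_l = j and decreasing the l-th part
yields a partition. -/
def RemovableAt (p : Ptn) (l j : ℕ+) : Prop :=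
  p.toFun l = (j : ℕ) ∧ ∃ q : Ptn, RemoveBoxAt p q l

/-- Edge of the Young graph: q is obtained from p by adding or removing a single box. -/
def YoungEdge (p q : Ptn) : Prop := (∃ k, AddBoxAt p q k) ∨ (∃ k, AddBoxAt q p k)

/-- d(i,j) = λ_i + λ_j − i − j + 1 if i ≤ j, and −λ^T_i − λ^T_j + i + j − 1 if i > j. -/
noncomputable def dbox (p : Ptn) (i j : ℕ+) : ℤ :=
  if (i : ℕ) ≤ (j : ℕ) then
    (p.toFun i : ℤ) + (p.toFun j : ℤ) - ((i : ℕ) : ℤ) - ((j : ℕ) : ℤ) + 1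
  else
    -(p.transpose i : ℤ) - (p.transpose j : ℤ) + ((i : ℕ) : ℤ) + ((j : ℕ) : ℤ) - 1

/-- Hook length h(i,j) = λ_i − j + λ^T_j − i + 1. -/
noncomputable def hook (p : Ptn) (i j : ℕ+) : ℤ :=
  (p.toFun i : ℤ) - ((j : ℕ) : ℤ) + (p.transpose j : ℤ) - ((i : ℕ) : ℤ) + 1

/-- The King polynomial P_λ(u) = ∏_{(i,j)∈[λ]} (u − 1 + d(i,j)) / h(i,j) ∈ ℚ[u]. -/
noncomputable def king (p : Ptn) : Polynomial ℚ :=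
  ∏ᶠ (q : ℕ+ × ℕ+) (_ : (q.2 : ℕ) ≤ p.toFun q.1),
    Polynomial.C ((hook p q.1 q.2 : ℚ))⁻¹ *
      (Polynomial.X + Polynomial.C ((dbox p q.1 q.2 : ℚ) - 1))

/-- (ρ_δ)_i = −δ/2 − i + 1. -/
def rhod (δ : ℤ) (i : ℕ+) : ℚ := -(δ : ℚ) / 2 - ((i : ℕ) : ℚ) + 1

/-- A sequence is dominant if it is strictly decreasing. -/
def Dominant (x : ℕ+ → ℚ) : Prop := ∀ i j : ℕ+, i < j → x j < x i

/-- ε_i: the sequence with 1 in position i and 0 elsewhere. -/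
def eps (i : ℕ+) : ℕ+ → ℚ := fun j => if j = i then 1 else 0

/-- Two sequences are adjacent if they differ by ±ε_i for some i. -/
def AdjacentSeq (x y : ℕ+ → ℚ) : Prop := ∃ i : ℕ+, y = x + eps i ∨ y = x - eps i

/-- x lies in the connected component of ρ_δ in the dominant part of the lattice graph:
x is dominant and is joined to ρ_δ by a finite chain of pairwise adjacent dominant
sequences. -/
def InComponent (δ : ℤ) (x : ℕ+ → ℚ) : Prop :=
  Dominant x ∧ ∃ (r : ℕ) (c : ℕ → ℕ+ → ℚ),
    c 0 = rhod δ ∧ c r = x ∧ (∀ t ≤ r, Dominant (c t)) ∧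
    ∀ t < r, AdjacentSeq (c t) (c (t + 1))

/-- λ ∈ A_δ: λ is joined to ∅ in the Young graph by a chain of δ-regular partitions. -/
def InAdelta (δ : ℤ) (p : Ptn) : Prop :=
  ∃ (r : ℕ) (c : ℕ → Ptn), c 0 = Ptn.empty ∧ c r = p ∧
    (∀ t ≤ r, degd δ (c t) = degd δ Ptn.empty) ∧
    ∀ t < r, YoungEdge (c t) (c (t + 1))

/-!
Shift the entries of `e_δ(λ)` by `δ/2` to the integers `E_i = λ^T_i - i + 1`. The integers that are
not of this form are exactly the `F_j = j - λ_j`, and a box `(i, j)` has `d(i, j) = 1 - δ` iff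
either `i ≤ j` and `F_i + F_j = δ`, or `j < i` and `E_i + E_j = δ`. The pairs `(i, j)` in `ℕ+ × ℕ+`
with the first property are in bijection with the ∘'s and those with the second with the ×'s, so it
remains to see which of these pairs are boxes of `λ`.

Consider the function `h(n) = #{i : |e_δ(λ)_i| < n} - n - δ/2 + 1` on the vertices of the weight
diagram. It goes down by one at every ∘, up by one at every × and is constant elsewhere; a ∘ comes
from a box iff `h > 0` there, and a × iff `h < 0`. Hence the boxes are the steps of the walk `h`
towards `0`. The walk starts near `1 - δ/2` and ends at `1 - δ`, thus moves away from `0` on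
balance, and then the number of steps towards `0` is the smaller of the numbers of down- and
up-steps.
-/

open Filter

/-! ### Counting -/

theorem ncard_setOf_lt_and_le (a b : ℕ) : {k : ℕ+ | a < k ∧ k ≤ b}.ncard = b - a := by
  have himage : (↑) '' {k : ℕ+ | a < k ∧ k ≤ b} = (Finset.Ioc a b : Set ℕ) := by
    ext n
    simp only [Set.mem_image, Set.mem_ofPred_eq, Finset.coe_Ioc, Set.mem_Ioc]
    exact ⟨fun ⟨_, hk, hkn⟩ => hkn ▸ hk, fun hn => ⟨⟨n, by omega⟩, hn, rfl⟩⟩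
  rw [← Set.ncard_image_of_injective _ PNat.coe_injective, himage, Set.ncard_coe_finset,
    Nat.card_Ioc]

theorem le_ncard_iff_mem_of_isLowerSet {S : Set ℕ+} (hS : IsLowerSet S) (hfin : S.Finite)
    (j : ℕ+) : (j : ℕ) ≤ S.ncard ↔ j ∈ S := by
  constructor
  · intro hj
    by_contra hjS
    have hsub : S ⊆ {k : ℕ+ | 0 < (k : ℕ) ∧ (k : ℕ) ≤ j - 1} := fun k hk => by
      have hkj : (k : ℕ) < j := lt_of_not_ge fun hjk => hjS (hS hjk hk)
      exact ⟨k.pos, by omega⟩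
    have hle := Set.ncard_le_ncard hsub ((Set.finite_Iic j).subset fun k hk =>
      PNat.coe_le_coe k j |>.1 (hk.2.trans (Nat.sub_le _ _)))
    rw [ncard_setOf_lt_and_le] at hle
    have := j.pos
    omega
  · intro hj
    calc (j : ℕ) = {k : ℕ+ | 0 < (k : ℕ) ∧ (k : ℕ) ≤ j}.ncard := by
          rw [ncard_setOf_lt_and_le, Nat.sub_zero]
      _ ≤ S.ncard := Set.ncard_le_ncard (fun k hk => hS (PNat.coe_le_coe k j |>.1 hk.2) hj) hfin

theorem ncard_preimage_insert {α β : Type*} {f : α → β} (hf : f.Injective) {s : Set β}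
    (hs : s.Finite) {b : β} (hb : b ∉ s) [Decidable (b ∈ Set.range f)] :
    (f ⁻¹' insert b s).ncard = (f ⁻¹' s).ncard + if b ∈ Set.range f then 1 else 0 := by
  split_ifs with hbf
  · obtain ⟨a, rfl⟩ := hbf
    have : f ⁻¹' insert (f a) s = insert a (f ⁻¹' s) := by
      ext x
      simp only [Set.mem_preimage, Set.mem_insert_iff, hf.eq_iff]
    rw [this, Set.ncard_insert_of_notMem (show a ∉ f ⁻¹' s from hb) (hs.preimage hf.injOn)]
  · have : f ⁻¹' insert b s = f ⁻¹' s := by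
      ext x
      have hx : f x ≠ b := fun h => hbf ⟨x, h⟩
      simp only [Set.mem_preimage, Set.mem_insert_iff, hx, false_or]
    rw [this, add_zero]

theorem ncard_sep_eq_of_bijOn {α β : Type*} {f : α → β} {s : Set α} {t : Set β}
    (hf : Set.BijOn f s t) {P : α → Prop} {Q : β → Prop} (hPQ : ∀ x ∈ s, P x ↔ Q (f x)) :
    {x ∈ s | P x}.ncard = {y ∈ t | Q y}.ncard := by
  refine Set.BijOn.ncard_eq (f := f) ⟨fun x hx => ⟨hf.mapsTo hx.1, (hPQ x hx.1).1 hx.2⟩,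
    hf.injOn.mono (Set.sep_subset _ _), ?_⟩
  rintro y ⟨hy, hQ⟩
  obtain ⟨x, hx, rfl⟩ := hf.surjOn hy
  exact ⟨x, ⟨hx, (hPQ x hx).2 hQ⟩, rfl⟩

theorem injOn_snd_of_add_eq {α : Type*} {g : α → ℤ} (hg : g.Injective) (c : ℤ) :
    Set.InjOn (fun q : α × α => g q.2) {q | g q.1 + g q.2 = c} := by
  intro q hq r hr (hqr : g q.2 = g r.2)
  rw [Set.mem_ofPred_eq] at hq hr
  exact Prod.ext (hg (by omega)) (hg hqr)

/-! ### Integer walks -/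

section Walk

/-- The set of times `m ≥ a` at which the integer walk `f` makes a step of size `d`. -/
def steps (f : ℤ → ℤ) (a d : ℤ) : Set ℤ := {m | a ≤ m ∧ f (m + 1) - f m = d}

theorem sum_Ico_sub_int (f : ℤ → ℤ) {a b : ℤ} (hab : a ≤ b) :
    ∑ m ∈ Finset.Ico a b, (f (m + 1) - f m) = f b - f a := by
  induction b, hab using Int.leInduction with
  | base => simp
  | succ b hab ih =>
    rw [← Finset.insert_Ico_right_eq_Ico_add_one hab, Finset.sum_insert Finset.right_notMem_Ico, ih]
    ring

variable {f : ℤ → ℤ} {a c : ℤ}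

theorem steps_subset_Ico {N d : ℤ} (hN : ∀ m ≥ N, f m = c) (hd : d ≠ 0) :
    steps f a d ⊆ Set.Ico a N := by
  rintro m ⟨ham, hm⟩
  refine ⟨ham, lt_of_not_ge fun hNm => hd ?_⟩
  rw [← hm, hN m hNm, hN (m + 1) (by omega), sub_self]

theorem finite_steps {d : ℤ} (hf : ∀ᶠ m in atTop, f m = c) (hd : d ≠ 0) :
    (steps f a d).Finite := by
  obtain ⟨N, hN⟩ := (eventually_forall_ge_atTop.2 hf).exists
  exact (Set.finite_Ico a N).subset (steps_subset_Ico hN hd)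

theorem ncard_steps_eq_sum {N d : ℤ} (hN : ∀ m ≥ N, f m = c) (hd : d ≠ 0) :
    ((steps f a d).ncard : ℤ) = ∑ m ∈ Finset.Ico a N, if f (m + 1) - f m = d then 1 else 0 := by
  have : steps f a d = ↑({m ∈ Finset.Ico a N | f (m + 1) - f m = d} : Finset ℤ) := by
    ext m
    rw [Finset.mem_coe, Finset.mem_filter, Finset.mem_Ico]
    exact ⟨fun hm => ⟨steps_subset_Ico hN hd hm, hm.2⟩, fun hm => ⟨hm.1.1, hm.2⟩⟩
  rw [this, Set.ncard_coe_finset, Finset.sum_boole]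

theorem ncard_steps_one_sub_ncard_steps_neg_one (hstep : ∀ m ≥ a, |f (m + 1) - f m| ≤ 1)
    (hf : ∀ᶠ m in atTop, f m = c) :
    ((steps f a 1).ncard : ℤ) - (steps f a (-1)).ncard = c - f a := by
  obtain ⟨N, hN, haN⟩ := ((eventually_forall_ge_atTop.2 hf).and (eventually_ge_atTop a)).exists
  rw [ncard_steps_eq_sum hN one_ne_zero, ncard_steps_eq_sum hN (by decide),
    ← Finset.sum_sub_distrib, ← hN N le_rfl, ← sum_Ico_sub_int f haN]
  refine Finset.sum_congr rfl fun m hm => ?_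
  have := abs_le.1 (hstep m (Finset.mem_Ico.1 hm).1)
  split_ifs <;> omega

theorem steps_posPart_one (hstep : ∀ m ≥ a, |f (m + 1) - f m| ≤ 1) :
    steps (fun m => max (f m) 0) a 1 = {m ∈ steps f a 1 | 0 ≤ f m} := by
  ext m
  simp only [steps, Set.mem_ofPred_eq, and_assoc]
  refine and_congr_right fun ham => ?_
  have := abs_le.1 (hstep m ham)
  omega

theorem steps_posPart_neg_one (hstep : ∀ m ≥ a, |f (m + 1) - f m| ≤ 1) :
    steps (fun m => max (f m) 0) a (-1) = {m ∈ steps f a (-1) | 0 < f m} := by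
  ext m
  simp only [steps, Set.mem_ofPred_eq, and_assoc]
  refine and_congr_right fun ham => ?_
  have := abs_le.1 (hstep m ham)
  omega

-- The positive part of a walk is again a walk; its steps account for those above `0`.
theorem ncard_steps_toward_zero (hstep : ∀ m ≥ a, |f (m + 1) - f m| ≤ 1)
    (hf : ∀ᶠ m in atTop, f m = c) (haway : 0 ≤ f a ∧ f a ≤ c ∨ c ≤ f a ∧ f a ≤ 0) :
    {m ∈ steps f a (-1) | 0 < f m}.ncard + {m ∈ steps f a 1 | f m < 0}.ncard
      = min (steps f a (-1)).ncard (steps f a 1).ncard := by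
  have hnet := ncard_steps_one_sub_ncard_steps_neg_one hstep hf
  have hnet_pos : ({m ∈ steps f a 1 | 0 ≤ f m}.ncard : ℤ) - {m ∈ steps f a (-1) | 0 < f m}.ncard
      = max c 0 - max (f a) 0 := by
    rw [← steps_posPart_one hstep, ← steps_posPart_neg_one hstep]
    refine ncard_steps_one_sub_ncard_steps_neg_one (fun m ham => ?_) (hf.mono fun m hm => ?_)
    · have := abs_le.1 (hstep m ham)
      exact abs_le.2 (by omega)
    · rw [hm]
  have hsplit : {m ∈ steps f a 1 | f m < 0}.ncard + {m ∈ steps f a 1 | 0 ≤ f m}.ncard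
      = (steps f a 1).ncard := by
    have hfin : (steps f a 1).Finite := finite_steps hf one_ne_zero
    rw [← Set.ncard_union_eq _ (hfin.sep _) (hfin.sep _)]
    · congr 1
      ext m
      simp only [Set.mem_union, Set.mem_ofPred_eq, ← and_or_left, lt_or_ge, and_true]
    · exact Set.disjoint_left.2 fun m hneg hnonneg => hneg.2.not_ge hnonneg.2
  omega

end Walk

namespace Ptn

variable (p : Ptn) (δ : ℤ)

/-! ### The entries of a partition and their complement -/

theorem le_transpose_iff (i j : ℕ+) : (j : ℕ) ≤ p.transpose i ↔ (i : ℕ) ≤ p.toFun j := by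
  refine le_ncard_iff_mem_of_isLowerSet (fun k l hlk hk => le_trans hk (p.antitone' l k hlk)) ?_ j
  obtain ⟨N, hN⟩ := p.finite_support'
  refine (Set.finite_Iio N).subset fun k hk => Set.mem_Iio.2 (lt_of_not_ge fun hNk => ?_)
  have hik : (i : ℕ) ≤ p.toFun k := hk
  exact i.ne_zero (by rwa [hN k hNk, Nat.le_zero] at hik)

theorem transpose_antitone : Antitone p.transpose := by
  intro i j hij
  rcases (p.transpose j).eq_zero_or_pos with h0 | hpos
  · exact h0 ▸ Nat.zero_le _
  · lift p.transpose j to ℕ+ using hpos with k hk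
    exact (p.le_transpose_iff i k).2 (le_trans hij ((p.le_transpose_iff j k).1 hk.le))

/-- The `i`-th entry of `e_δ(λ)` shifted by `δ/2`, an integer independent of `δ`. -/
noncomputable def entry (i : ℕ+) : ℤ := p.transpose i - (i : ℕ) + 1

/-- The integers `j - λ_j`; they are exactly those that are not shifted entries of `e_δ(λ)`. -/
def gap (j : ℕ+) : ℤ := (j : ℕ) - p.toFun j

theorem entry_strictAnti : StrictAnti p.entry := by
  intro i j (hij : (i : ℕ) < j)
  have := p.transpose_antitone hij.le
  unfold entry
  omega

theorem gap_strictMono : StrictMono p.gap := by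
  intro i j (hij : (i : ℕ) < j)
  have := p.antitone' i j hij.le
  unfold gap
  omega

theorem gap_lt_entry_iff (i j : ℕ+) : p.gap j < p.entry i ↔ (i : ℕ) ≤ p.toFun j := by
  have := p.le_transpose_iff i j
  unfold entry gap
  omega

theorem entry_lt_gap_iff (i j : ℕ+) : p.entry i < p.gap j ↔ p.toFun j < (i : ℕ) := by
  have := p.le_transpose_iff i j
  unfold entry gap
  omega

theorem exists_entry_le_and_forall_lt (t : ℤ) :
    ∃ i, p.entry i ≤ t ∧ ∀ k < i, t < p.entry k := by
  have hex : ∃ i : ℕ+, p.entry i ≤ t := by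
    let i : ℕ+ := (p.transpose 1 - t).toNat.succPNat
    have := p.transpose_antitone (one_le (a := i))
    have hi : (i : ℕ) = (p.transpose 1 - t).toNat + 1 := Nat.succPNat_coe _
    exact ⟨i, by unfold entry; omega⟩
  exact ⟨PNat.find hex, PNat.find_spec hex, fun k hk => not_le.1 (PNat.find_min hex hk)⟩

theorem notMem_range_entry_iff (t : ℤ) : t ∉ Set.range p.entry ↔ t ∈ Set.range p.gap := by
  refine ⟨fun ht => ?_, ?_⟩
  · obtain ⟨i, hle, hgt⟩ := p.exists_entry_le_and_forall_lt t
    have hlt : p.entry i < t := hle.lt_of_ne fun h => ht ⟨i, h⟩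
    have hpos : 0 < t + i - 1 := by unfold entry at hlt; omega
    lift t + i - 1 to ℕ+ using hpos with j hj
    have hupper : p.toFun j < i := by
      rw [← not_le, ← p.le_transpose_iff]
      unfold entry at hlt
      omega
    have hlower : (i : ℕ) ≤ p.toFun j + 1 := by
      rcases eq_or_ne i 1 with rfl | hi
      · rw [PNat.one_coe]
        omega
      · obtain ⟨k, rfl⟩ := PNat.exists_eq_succ_of_ne_one hi
        have hk := hgt k (PNat.lt_add_right k 1)
        rw [PNat.add_coe, PNat.one_coe] at hj ⊢
        have := (p.le_transpose_iff k j).1 (by unfold entry at hk; omega)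
        omega
    exact ⟨j, by unfold gap; omega⟩
  · rintro ⟨j, rfl⟩ ⟨i, hi⟩
    have := p.gap_lt_entry_iff i j
    have := p.entry_lt_gap_iff i j
    omega

/-! ### Circles and crosses -/

/-- The vertices labelled ∘ in the weight diagram, shifted by `δ/2`. -/
def circles : Set ℤ := {m | δ ≤ 2 * m ∧ m ∉ Set.range p.entry ∧ δ - m ∉ Set.range p.entry}

/-- The vertices labelled × in the weight diagram, shifted by `δ/2`. -/
def crosses : Set ℤ := {m | δ < 2 * m ∧ m ∈ Set.range p.entry ∧ δ - m ∈ Set.range p.entry}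

theorem ed_eq_entry_sub (i : ℕ+) : ed δ p i = p.entry i - (δ : ℚ) / 2 := by
  simp only [ed, entry]
  push_cast
  ring

theorem ed_add_ed_eq_zero_iff (i j : ℕ+) :
    ed δ p i + ed δ p j = 0 ↔ p.entry i + p.entry j = δ := by
  have : ed δ p i + ed δ p j = ((p.entry i + p.entry j - δ : ℤ) : ℚ) := by
    rw [ed_eq_entry_sub, ed_eq_entry_sub]
    push_cast
    ring
  rw [this, Int.cast_eq_zero, sub_eq_zero]

theorem abs_ed_eq_iff {m : ℤ} (hm : δ ≤ 2 * m) (i : ℕ+) :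
    |ed δ p i| = m - (δ : ℚ) / 2 ↔ p.entry i = m ∨ p.entry i = δ - m := by
  have hm' : (δ : ℚ) ≤ 2 * m := mod_cast hm
  have hneg : -((m : ℚ) - (δ : ℚ) / 2) = ((δ - m : ℤ) : ℚ) - (δ : ℚ) / 2 := by
    push_cast
    ring
  rw [abs_eq (by linarith), ed_eq_entry_sub, hneg, sub_left_inj, sub_left_inj, Int.cast_inj,
    Int.cast_inj]

theorem isCirc_iff_mem_circles {m : ℤ} (hm : δ ≤ 2 * m) :
    IsCirc δ p (m - (δ : ℚ) / 2) ↔ m ∈ p.circles δ := by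
  simp only [IsCirc, ne_eq, p.abs_ed_eq_iff δ hm, not_or, forall_and, circles, Set.mem_range,
    not_exists, Set.mem_ofPred_eq, hm, true_and]

theorem mem_Lset_iff {n : ℚ} : n ∈ Lset δ ↔ ∃ m : ℤ, δ ≤ 2 * m ∧ n = m - (δ : ℚ) / 2 := by
  constructor
  · rintro ⟨hn, m, hm⟩
    exact ⟨m, by exact_mod_cast (by linarith : (δ : ℚ) ≤ 2 * m), by linarith⟩
  · rintro ⟨m, hm, rfl⟩
    have hm' : (δ : ℚ) ≤ 2 * m := mod_cast hm
    exact ⟨by linarith, m, by ring⟩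

theorem ncard_isCirc : {n : ℚ | n ∈ Lset δ ∧ IsCirc δ p n}.ncard = (p.circles δ).ncard := by
  have himage : {n : ℚ | n ∈ Lset δ ∧ IsCirc δ p n}
      = (fun m : ℤ => (m : ℚ) - (δ : ℚ) / 2) '' p.circles δ := by
    ext n
    simp only [Set.mem_ofPred_eq, mem_Lset_iff, Set.mem_image]
    constructor
    · rintro ⟨⟨m, hm, rfl⟩, hcirc⟩
      exact ⟨m, (p.isCirc_iff_mem_circles δ hm).1 hcirc, rfl⟩
    · rintro ⟨m, hmem, rfl⟩
      exact ⟨⟨m, hmem.1, rfl⟩, (p.isCirc_iff_mem_circles δ hmem.1).2 hmem⟩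
  have hinj : Function.Injective fun m : ℤ => (m : ℚ) - (δ : ℚ) / 2 :=
    sub_left_injective.comp Int.cast_injective
  rw [himage, Set.ncard_image_of_injective _ hinj]

/-- The pairs `i ≤ j` with `j - λ_j` and `i - λ_i` symmetric about `δ/2`. -/
def gapPairs : Set (ℕ+ × ℕ+) := {q | q.1 ≤ q.2 ∧ p.gap q.1 + p.gap q.2 = δ}

/-- The pairs `i > j` with the `i`-th and `j`-th entries of `e_δ(λ)` opposite. -/
def entryPairs : Set (ℕ+ × ℕ+) := {q | q.2 < q.1 ∧ p.entry q.1 + p.entry q.2 = δ}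

theorem bijOn_gapPairs : Set.BijOn (fun q => p.gap q.2) (p.gapPairs δ) (p.circles δ) := by
  refine ⟨?_, (injOn_snd_of_add_eq p.gap_strictMono.injective δ).mono fun q hq => hq.2, ?_⟩
  · rintro ⟨i, j⟩ ⟨hij : i ≤ j, hsum : p.gap i + p.gap j = δ⟩
    have := p.gap_strictMono.monotone hij
    exact ⟨by dsimp only; omega, (p.notMem_range_entry_iff _).2 ⟨j, rfl⟩,
      (p.notMem_range_entry_iff _).2 ⟨i, by dsimp only; omega⟩⟩
  · rintro m ⟨hm, hupper, hlower⟩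
    obtain ⟨j, rfl⟩ := (p.notMem_range_entry_iff _).1 hupper
    obtain ⟨i, hi⟩ := (p.notMem_range_entry_iff _).1 hlower
    have hij : p.gap i ≤ p.gap j := by omega
    exact ⟨(i, j), ⟨p.gap_strictMono.le_iff_le.1 hij, by dsimp only; omega⟩, rfl⟩

theorem bijOn_entryPairs : Set.BijOn (fun q => p.entry q.2) (p.entryPairs δ) (p.crosses δ) := by
  refine ⟨?_, (injOn_snd_of_add_eq p.entry_strictAnti.injective δ).mono fun q hq => hq.2, ?_⟩
  · rintro ⟨i, j⟩ ⟨hji : j < i, hsum : p.entry i + p.entry j = δ⟩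
    have := p.entry_strictAnti hji
    exact ⟨by dsimp only; omega, ⟨j, rfl⟩, ⟨i, by dsimp only; omega⟩⟩
  · rintro m ⟨hm, ⟨j, rfl⟩, ⟨i, hi⟩⟩
    have hij : p.entry i < p.entry j := by omega
    exact ⟨(i, j), ⟨p.entry_strictAnti.lt_iff_gt.1 hij, by dsimp only; omega⟩, rfl⟩

theorem degd_eq_ncard_crosses : degd δ p = (p.crosses δ).ncard := by
  have hswap : {q : ℕ+ × ℕ+ | q.1 < q.2 ∧ ed δ p q.1 + ed δ p q.2 = 0}
      = Prod.swap '' p.entryPairs δ := by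
    ext ⟨i, j⟩
    simp only [ed_add_ed_eq_zero_iff, Set.image_swap_eq_preimage_swap, entryPairs,
      Set.mem_preimage, Set.mem_ofPred_eq, Prod.fst_swap, Prod.snd_swap, add_comm]
  rw [degd, hswap, Set.ncard_image_of_injective _ Prod.swap_injective,
    (p.bijOn_entryPairs δ).ncard_eq]

/-! ### The height walk -/

/-- The walk `n ↦ #{i : |e_δ(λ)_i| < n} - n - δ/2 + 1` on the vertices of the weight diagram,
as a function of `m = n + δ/2`. -/
noncomputable def height (m : ℤ) : ℤ := (p.entry ⁻¹' Set.Ioo (δ - m) m).ncard - m + 1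

open Classical in
theorem height_add_one_of_eq {m : ℤ} (hm : δ = 2 * m) :
    p.height δ (m + 1) = p.height δ m + (if m ∈ Set.range p.entry then 1 else 0) - 1 := by
  have hinsert : Set.Ioo (δ - (m + 1)) (m + 1) = insert m (Set.Ioo (δ - m) m) := by
    ext t
    simp only [Set.mem_Ioo, Set.mem_insert_iff]
    omega
  rw [height, height, hinsert, ncard_preimage_insert p.entry_strictAnti.injective
    (Set.finite_Ioo _ _) (by simp)]
  push_cast
  ring

open Classical in
theorem height_add_one_of_lt {m : ℤ} (hm : δ < 2 * m) :
    p.height δ (m + 1) = p.height δ m + (if m ∈ Set.range p.entry then 1 else 0)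
      + (if δ - m ∈ Set.range p.entry then 1 else 0) - 1 := by
  have hinsert : Set.Ioo (δ - (m + 1)) (m + 1)
      = insert m (insert (δ - m) (Set.Ioo (δ - m) m)) := by
    ext t
    simp only [Set.mem_Ioo, Set.mem_insert_iff]
    omega
  have hne : m ∉ insert (δ - m) (Set.Ioo (δ - m) m) := by
    simp only [Set.mem_insert_iff, Set.mem_Ioo]
    omega
  have hinj := p.entry_strictAnti.injective
  rw [height, height, hinsert, ncard_preimage_insert hinj ((Set.finite_Ioo _ _).insert _) hne,
    ncard_preimage_insert hinj (Set.finite_Ioo _ _) (by simp)]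
  push_cast
  ring

open Classical in
theorem height_add_one_sub_height {m : ℤ} (hm : δ ≤ 2 * m) :
    p.height δ (m + 1) - p.height δ m
      = (if m ∈ p.crosses δ then 1 else 0) - (if m ∈ p.circles δ then 1 else 0) := by
  rcases hm.eq_or_lt with heq | hlt
  · have hcross : m ∉ p.crosses δ := fun h => heq.not_lt h.1
    have hcirc : m ∈ p.circles δ ↔ m ∉ Set.range p.entry := by
      rw [circles, Set.mem_ofPred_eq, show δ - m = m by omega, and_self, and_iff_right hm]
    rw [p.height_add_one_of_eq δ heq, if_neg hcross, if_congr hcirc rfl rfl, ite_not]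
    split_ifs <;> ring
  · have hcross : m ∈ p.crosses δ ↔ m ∈ Set.range p.entry ∧ δ - m ∈ Set.range p.entry :=
      and_iff_right hlt
    have hcirc : m ∈ p.circles δ ↔ m ∉ Set.range p.entry ∧ δ - m ∉ Set.range p.entry :=
      and_iff_right hm
    rw [p.height_add_one_of_lt δ hlt]
    by_cases hupper : m ∈ Set.range p.entry <;> by_cases hlower : δ - m ∈ Set.range p.entry <;>
      simp only [hcross, hcirc, hupper, hlower, not_true, not_false_eq_true, and_true, and_false,
        if_true, if_false] <;>
      ring

theorem disjoint_crosses_circles : Disjoint (p.crosses δ) (p.circles δ) :=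
  Set.disjoint_left.2 fun _ hcross hcirc => hcirc.2.1 hcross.2.1

theorem abs_height_add_one_sub_height_le {m : ℤ} (hm : δ ≤ 2 * m) :
    |p.height δ (m + 1) - p.height δ m| ≤ 1 := by
  classical
  rw [p.height_add_one_sub_height δ hm]
  split_ifs <;> norm_num

-- The least vertex, shifted by `δ/2`, is `⌈δ/2⌉ = δ - ⌊δ/2⌋`.
theorem steps_height_one : steps (p.height δ) (δ - δ / 2) 1 = p.crosses δ := by
  classical
  ext m
  constructor
  · rintro ⟨ham, hstep⟩
    rw [p.height_add_one_sub_height δ (by omega)] at hstep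
    by_contra hcross
    rw [if_neg hcross] at hstep
    split_ifs at hstep <;> omega
  · intro hcross
    have hm := hcross.1
    refine ⟨by omega, ?_⟩
    rw [p.height_add_one_sub_height δ hm.le, if_pos hcross,
      if_neg (Set.disjoint_left.1 (p.disjoint_crosses_circles δ) hcross), sub_zero]

theorem steps_height_neg_one : steps (p.height δ) (δ - δ / 2) (-1) = p.circles δ := by
  classical
  ext m
  constructor
  · rintro ⟨ham, hstep⟩
    rw [p.height_add_one_sub_height δ (by omega)] at hstep
    by_contra hcirc
    rw [if_neg hcirc] at hstep
    split_ifs at hstep <;> omega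
  · intro hcirc
    have hm := hcirc.1
    refine ⟨by omega, ?_⟩
    rw [p.height_add_one_sub_height δ hm, if_pos hcirc,
      if_neg (Set.disjoint_right.1 (p.disjoint_crosses_circles δ) hcirc), zero_sub]

theorem height_start : p.height δ (δ - δ / 2) = 1 - (δ - δ / 2) := by
  have hempty : Set.Ioo (δ - (δ - δ / 2)) (δ - δ / 2) = ∅ := by
    ext t
    simp only [Set.mem_Ioo, Set.mem_empty_iff_false, iff_false]
    omega
  rw [height, hempty, Set.preimage_empty, Set.ncard_empty]
  push_cast
  ring

theorem entry_le_transpose_one (i : ℕ+) : p.entry i ≤ p.transpose 1 := by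
  have := p.transpose_antitone (one_le (a := i))
  have := i.pos
  unfold entry
  omega

theorem entry_eq_one_sub {i : ℕ+} (hi : p.toFun 1 < i) : p.entry i = 1 - (i : ℕ) := by
  have := p.le_transpose_iff i 1
  rw [PNat.one_coe] at this
  unfold entry
  omega

theorem eventually_height_eq : ∀ᶠ m in atTop, p.height δ m = 1 - δ := by
  filter_upwards [eventually_gt_atTop (p.transpose 1 : ℤ),
    eventually_gt_atTop (δ + p.toFun 1)] with m htop hbot
  have hpos : 0 < 1 - δ + m := by omega
  lift 1 - δ + m to ℕ+ using hpos with i hi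
  have hentry : δ - m = p.entry i := by
    rw [p.entry_eq_one_sub (by omega)]
    omega
  have hset : p.entry ⁻¹' Set.Ioo (δ - m) m = {k : ℕ+ | 0 < (k : ℕ) ∧ (k : ℕ) ≤ i - 1} := by
    ext k
    have hk : p.entry k < m := (p.entry_le_transpose_one k).trans_lt htop
    have := k.pos
    rw [Set.mem_preimage, Set.mem_Ioo, hentry, and_iff_left hk, p.entry_strictAnti.lt_iff_gt,
      ← PNat.coe_lt_coe, Set.mem_ofPred_eq]
    omega
  have := i.pos
  rw [height, hset, ncard_setOf_lt_and_le]
  omega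

theorem height_gap {i j : ℕ+} (hij : (i, j) ∈ p.gapPairs δ) :
    p.height δ (p.gap j) = p.toFun i - (j : ℕ) + 1 := by
  obtain ⟨hle : i ≤ j, hsum : p.gap i + p.gap j = δ⟩ := hij
  have hset : p.entry ⁻¹' Set.Ioo (δ - p.gap j) (p.gap j)
      = {k : ℕ+ | p.toFun j < (k : ℕ) ∧ (k : ℕ) ≤ p.toFun i} := by
    ext k
    rw [Set.mem_preimage, Set.mem_Ioo, ← hsum, add_sub_cancel_right, gap_lt_entry_iff,
      entry_lt_gap_iff, and_comm, Set.mem_ofPred_eq]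
  have := p.antitone' i j hle
  rw [height, hset, ncard_setOf_lt_and_le, gap]
  omega

theorem height_entry {i j : ℕ+} (hij : (i, j) ∈ p.entryPairs δ) :
    p.height δ (p.entry j) = (i : ℕ) - 1 - p.transpose j := by
  obtain ⟨hlt : j < i, hsum : p.entry i + p.entry j = δ⟩ := hij
  have hset : p.entry ⁻¹' Set.Ioo (δ - p.entry j) (p.entry j)
      = {k : ℕ+ | (j : ℕ) < k ∧ (k : ℕ) ≤ i - 1} := by
    ext k
    have := i.pos
    rw [Set.mem_preimage, Set.mem_Ioo, ← hsum, add_sub_cancel_right,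
      p.entry_strictAnti.lt_iff_gt, p.entry_strictAnti.lt_iff_gt, ← PNat.coe_lt_coe,
      ← PNat.coe_lt_coe, Set.mem_ofPred_eq]
    omega
  have : (j : ℕ) < i := hlt
  rw [height, hset, ncard_setOf_lt_and_le, entry]
  omega

/-! ### Boxes -/

theorem dbox_eq_one_sub_iff (i j : ℕ+) :
    dbox p i j = 1 - δ ↔ (i, j) ∈ p.gapPairs δ ∨ (i, j) ∈ p.entryPairs δ := by
  simp only [dbox, gapPairs, entryPairs, gap, entry, Set.mem_ofPred_eq, ← PNat.coe_le_coe,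
    ← PNat.coe_lt_coe]
  split_ifs <;> omega

theorem ncard_box_gapPairs :
    {q ∈ p.gapPairs δ | (q.2 : ℕ) ≤ p.toFun q.1}.ncard
      = {m ∈ p.circles δ | 0 < p.height δ m}.ncard := by
  refine ncard_sep_eq_of_bijOn (p.bijOn_gapPairs δ) fun q hq => ?_
  rw [p.height_gap δ hq]
  omega

theorem ncard_box_entryPairs :
    {q ∈ p.entryPairs δ | (q.2 : ℕ) ≤ p.toFun q.1}.ncard
      = {m ∈ p.crosses δ | p.height δ m < 0}.ncard := by
  refine ncard_sep_eq_of_bijOn (p.bijOn_entryPairs δ) fun q hq => ?_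
  rw [p.height_entry δ hq, ← p.le_transpose_iff]
  omega

theorem finite_gapPairs : (p.gapPairs δ).Finite := by
  rw [(p.bijOn_gapPairs δ).finite_iff_finite, ← p.steps_height_neg_one]
  exact finite_steps (p.eventually_height_eq δ) (by decide)

theorem finite_entryPairs : (p.entryPairs δ).Finite := by
  rw [(p.bijOn_entryPairs δ).finite_iff_finite, ← p.steps_height_one]
  exact finite_steps (p.eventually_height_eq δ) one_ne_zero

theorem ncard_dbox_eq :
    {q : ℕ+ × ℕ+ | (q.2 : ℕ) ≤ p.toFun q.1 ∧ dbox p q.1 q.2 = 1 - δ}.ncard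
      = {q ∈ p.gapPairs δ | (q.2 : ℕ) ≤ p.toFun q.1}.ncard
        + {q ∈ p.entryPairs δ | (q.2 : ℕ) ≤ p.toFun q.1}.ncard := by
  rw [← Set.ncard_union_eq _ ((p.finite_gapPairs δ).sep _) ((p.finite_entryPairs δ).sep _)]
  · congr 1
    ext q
    simp only [Set.mem_union, Set.mem_ofPred_eq, dbox_eq_one_sub_iff, ← or_and_right, and_comm]
  · exact Set.disjoint_left.2 fun q hgap hentry => hgap.1.1.not_gt hentry.1.1

theorem ncard_circles_height_pos_add_ncard_crosses_height_neg :
    {m ∈ p.circles δ | 0 < p.height δ m}.ncard + {m ∈ p.crosses δ | p.height δ m < 0}.ncard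
      = min (p.circles δ).ncard (p.crosses δ).ncard := by
  rw [← p.steps_height_neg_one, ← p.steps_height_one]
  refine ncard_steps_toward_zero (fun m hm => p.abs_height_add_one_sub_height_le δ (by omega))
    (p.eventually_height_eq δ) ?_
  rw [height_start]
  omega

end Ptn

/-- #{(i,j) ∈ [λ] : d(i,j) = 1 − δ} = min(a, b) where a is the number of
∘'s and b = deg_δ(λ) the number of ×'s in the weight diagram x_λ. -/
theorem stmt12 (δ : ℤ) (p : Ptn) :
    Set.ncard {q : ℕ+ × ℕ+ | (q.2 : ℕ) ≤ p.toFun q.1 ∧ dbox p q.1 q.2 = 1 - δ}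
      = min (Set.ncard {n : ℚ | n ∈ Lset δ ∧ IsCirc δ p n}) (degd δ p) := by
  rw [p.ncard_dbox_eq, p.ncard_box_gapPairs, p.ncard_box_entryPairs, p.ncard_isCirc,
    p.degd_eq_ncard_crosses, p.ncard_circles_height_pos_add_ncard_crosses_height_neg]
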